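/- arXiv:1711.09221 — 4 statements merged into one kernel-verified Lean document; each statement's English description precedes it below -/
import Mathlib

section
/- Let X ⊆ ℝ^n be nonempty, compact and convex, let f : ℝ^n → ℝ be convex, and let g : ℝ^n → ℝ^S have every component convex, where S is a nonempty finite index set. Assume the feasible set F := { x ∈ X : g(x) ⪯ 0 } is nonempty, set f* := inf_{x ∈ F} f(x), and assume there exists μ* ∈ ℝ^S with μ* ⪰ 0 such that inf_{x ∈ X} ( f(x) + ⟨μ*, g(x)⟩ ) = f* (a geometric multiplier). If M > ∑_s μ*_s, then a pair (x̄, ρ̄) with x̄ ∈ X, ρ̄ ≥ 0 and g(x̄) ⪯ ρ̄·𝟏 minimizes (x,ρ) ↦ f(x) + M ρ over { (x,ρ) : x ∈ X, ρ ≥ 0, g(x) ⪯ ρ·𝟏 } if and only if ρ̄ = 0 and x̄ minimizes f over F; moreover the optimal value of the relaxed problem equals f*. -/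
/-- Proposition 1 of the paper.
Under an exact-penalty condition `M > ∑ s, μ* s` on a geometric multiplier `μ*`,
a feasible pair `(x̄, ρ̄)` of the relaxed problem is optimal for it if and only if
`ρ̄ = 0` and `x̄` minimizes `f` over the feasible set `F = {x ∈ X : g x ⪯ 0}`;
moreover the optimal value of the relaxed problem equals `f*`. -/
theorem stmt_3 {n : ℕ} {S : Type} [Fintype S] [Nonempty S]
    (X : Set (Fin n → ℝ)) (hXne : X.Nonempty) (hXcp : IsCompact X) (hXcv : Convex ℝ X)
    (f : (Fin n → ℝ) → ℝ) (hf : ConvexOn ℝ Set.univ f)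
    (g : (Fin n → ℝ) → S → ℝ) (hg : ∀ s, ConvexOn ℝ Set.univ (fun x => g x s))
    (hFne : {x | x ∈ X ∧ ∀ s, g x s ≤ 0}.Nonempty)
    (fstar : ℝ)
    (hfstar : fstar = sInf {y | ∃ x ∈ X, (∀ s, g x s ≤ 0) ∧ f x = y})
    (μstar : S → ℝ) (hμpos : ∀ s, 0 ≤ μstar s)
    (hmult : sInf {y | ∃ x ∈ X, f x + ∑ s, μstar s * g x s = y} = fstar)
    (M : ℝ) (hM : M > ∑ s, μstar s)
    (xbar : Fin n → ℝ) (ρbar : ℝ)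
    (hxbar : xbar ∈ X) (hρbar : 0 ≤ ρbar) (hgxbar : ∀ s, g xbar s ≤ ρbar) :
    ((∀ x ∈ X, ∀ ρ : ℝ, 0 ≤ ρ → (∀ s, g x s ≤ ρ) →
        f xbar + M * ρbar ≤ f x + M * ρ)
      ↔ (ρbar = 0 ∧ (∀ s, g xbar s ≤ 0) ∧
          ∀ x ∈ X, (∀ s, g x s ≤ 0) → f xbar ≤ f x))
    ∧ sInf {y | ∃ x ∈ X, ∃ ρ : ℝ, 0 ≤ ρ ∧ (∀ s, g x s ≤ ρ) ∧ f x + M * ρ = y} = fstar := by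
  have hfc : Continuous f :=
    continuousOn_univ.1 (hf.continuousOn isOpen_univ)
  have hgc : ∀ s, Continuous (fun x => g x s) := fun s =>
    continuousOn_univ.1 ((hg s).continuousOn isOpen_univ)
  have hLc : Continuous (fun x => f x + ∑ s, μstar s * g x s) :=
    hfc.add (continuous_finsetSum _ fun s _ => continuous_const.mul (hgc s))
  have hbdd : BddBelow {y | ∃ x ∈ X, f x + ∑ s, μstar s * g x s = y} :=
    (hXcp.image hLc).bddBelow
  have key : ∀ x ∈ X, ∀ ρ : ℝ, (∀ s, g x s ≤ ρ) →
      fstar ≤ f x + (∑ s, μstar s) * ρ := by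
    intro x hx ρ hgx
    have h1 : fstar ≤ f x + ∑ s, μstar s * g x s := by
      rw [← hmult]
      exact csInf_le hbdd ⟨x, hx, rfl⟩
    have h2 : ∑ s, μstar s * g x s ≤ (∑ s, μstar s) * ρ := by
      rw [Finset.sum_mul]
      exact Finset.sum_le_sum fun s _ => mul_le_mul_of_nonneg_left (hgx s) (hμpos s)
    linarith
  have keyM : ∀ x ∈ X, ∀ ρ : ℝ, 0 ≤ ρ → (∀ s, g x s ≤ ρ) → fstar ≤ f x + M * ρ := by
    intro x hx ρ hρ hgx
    have h1 := key x hx ρ hgx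
    have h2 := mul_le_mul_of_nonneg_right hM.le hρ
    linarith
  obtain ⟨x0, hx0, hgx0⟩ := hFne
  have hle : ∀ c : ℝ, (∀ x ∈ X, (∀ s, g x s ≤ 0) → c ≤ f x) → c ≤ fstar := by
    intro c hc
    rw [hfstar]
    refine le_csInf ⟨f x0, x0, hx0, hgx0, rfl⟩ ?_
    rintro y ⟨x, hx, hgx, rfl⟩
    exact hc x hx hgx
  refine ⟨⟨fun h => ?_, ?_⟩, ?_⟩
  · have h1 : f xbar + M * ρbar ≤ fstar := hle _ fun x hx hgx => by
      simpa using h x hx 0 le_rfl hgx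
    have h2 := key xbar hxbar ρbar hgxbar
    have h0 : ρbar = 0 := by
      by_contra hne
      have hpos : 0 < ρbar := lt_of_le_of_ne hρbar (Ne.symm hne)
      have h3 := mul_lt_mul_of_pos_right hM hpos
      linarith
    subst h0
    exact ⟨rfl, hgxbar, fun x hx hgx => by simpa using h x hx 0 le_rfl hgx⟩
  · rintro ⟨rfl, _, hmin⟩ x hx ρ hρ hgx
    have h1 := hle _ hmin
    have h2 := keyM x hx ρ hρ hgx
    linarith
  · apply le_antisymm
    · refine hle _ fun x hx hgx => csInf_le ⟨fstar, ?_⟩ ⟨x, hx, 0, le_rfl, hgx, by simp⟩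
      rintro y ⟨x, hx, ρ, hρ, hgx, rfl⟩
      exact keyM x hx ρ hρ hgx
    · refine le_csInf ⟨_, x0, hx0, 0, le_rfl, hgx0, rfl⟩ ?_
      rintro y ⟨x, hx, ρ, hρ, hgx, rfl⟩
      exact keyM x hx ρ hρ hgx
end

section
/- Let X ⊆ ℝ^n be nonempty, compact and convex, let f : ℝ^n → ℝ be convex, let g : ℝ^n → ℝ^S have every component convex, with S a nonempty finite index set, let δ ∈ ℝ^S and M > 0, and define q(μ) := inf_{x ∈ X} ( f(x) + ⟨μ, g(x)⟩ ). If (x*, ρ*) minimizes (x,ρ) ↦ f(x) + M ρ over { (x,ρ) : x ∈ X, ρ ≥ 0, g(x) + δ ⪯ ρ·𝟏 }, then f(x*) + M ρ* = sup_{μ ∈ Δ_M} ( q(μ) + ⟨μ, δ⟩ ). -/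
/-- Corollary 1 of the paper.
If `(x*, ρ*)` minimizes the local relaxed problem, then its optimal cost
`f x* + M ρ*` equals `sup_{μ ∈ Δ_M} (q μ + ⟨μ, δ⟩)`, the value of the local term
of the second dual function. -/
theorem stmt_11 {n : ℕ} {S : Type} [Fintype S] [Nonempty S]
    (X : Set (Fin n → ℝ)) (hXne : X.Nonempty) (hXcp : IsCompact X) (hXcv : Convex ℝ X)
    (f : (Fin n → ℝ) → ℝ) (hf : ConvexOn ℝ Set.univ f)
    (g : (Fin n → ℝ) → S → ℝ) (hg : ∀ s, ConvexOn ℝ Set.univ (fun x => g x s))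
    (δ : S → ℝ) (M : ℝ) (hM : 0 < M)
    (q : (S → ℝ) → ℝ)
    (hq : ∀ μ : S → ℝ, q μ = sInf {y | ∃ x ∈ X, f x + ∑ s, μ s * g x s = y})
    (xstar : Fin n → ℝ) (ρstar : ℝ)
    (hfeas : xstar ∈ X ∧ 0 ≤ ρstar ∧ ∀ s, g xstar s + δ s ≤ ρstar)
    (hmin : ∀ (x : Fin n → ℝ) (ρ : ℝ), x ∈ X → 0 ≤ ρ → (∀ s, g x s + δ s ≤ ρ) →
      f xstar + M * ρstar ≤ f x + M * ρ) :
    f xstar + M * ρstar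
      = sSup {y | ∃ μ : S → ℝ, ((∀ s, 0 ≤ μ s) ∧ ∑ s, μ s ≤ M) ∧
          q μ + ∑ s, μ s * δ s = y} := by
  classical
  have hfc : Continuous f := hf.locallyLipschitz.continuous
  have hgc : ∀ s, Continuous (fun x => g x s) := fun s => (hg s).locallyLipschitz.continuous
  obtain ⟨hxX, hρ0, hxg⟩ := hfeas
  let D : Set (S → ℝ) := {μ | (∀ s, 0 ≤ μ s) ∧ ∑ s, μ s ≤ M}
  let h : (Fin n → ℝ) → (S → ℝ) → ℝ := fun x μ => f x + ∑ s, μ s * (g x s + δ s)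
  have hh : ∀ x μ, h x μ = (f x + ∑ s, μ s * g x s) + ∑ s, μ s * δ s := by
    intro x μ
    simp only [h, mul_add, Finset.sum_add_distrib, add_assoc]
  have hhc : ∀ μ, Continuous (fun x => h x μ) := by
    intro μ
    exact hfc.add (continuous_finset_sum _ fun s _ =>
      continuous_const.mul ((hgc s).add continuous_const))
  have hhc2 : ∀ x, Continuous (fun μ => h x μ) := by
    intro x
    exact continuous_const.add (continuous_finset_sum _ fun s _ =>
      (continuous_apply s).mul continuous_const)
  have hDcv : Convex ℝ D := by
    rintro μ ⟨h1, h2⟩ ν ⟨h3, h4⟩ a b ha hb hab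
    refine ⟨fun s => ?_, ?_⟩
    · have := mul_nonneg ha (h1 s)
      have := mul_nonneg hb (h3 s)
      simp only [Pi.add_apply, Pi.smul_apply, smul_eq_mul]
      linarith
    · simp only [Pi.add_apply, Pi.smul_apply, smul_eq_mul, Finset.sum_add_distrib,
        ← Finset.mul_sum]
      calc _ ≤ a * M + b * M := by gcongr
        _ = M := by rw [← add_mul, hab, one_mul]
  have h0D : (0 : S → ℝ) ∈ D := ⟨fun s => le_rfl, by simpa using hM.le⟩
  have hDcp : IsCompact D := by
    refine (isCompact_Icc (a := (0 : S → ℝ)) (b := fun _ => M)).of_isClosed_subset ?_ ?_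
    · have e : D = (⋂ s, {μ : S → ℝ | 0 ≤ μ s}) ∩ {μ | ∑ s, μ s ≤ M} := by
        ext μ; simp [D]
      rw [e]
      exact (isClosed_iInter fun s => isClosed_le continuous_const (continuous_apply s)).inter
        (isClosed_le (continuous_finset_sum _ fun s _ => continuous_apply s) continuous_const)
    · rintro μ ⟨h1, h2⟩
      exact ⟨fun s => h1 s, fun s =>
        (Finset.single_le_sum (fun t _ => h1 t) (Finset.mem_univ s)).trans h2⟩
  have hcvx : ∀ μ ∈ D, ConvexOn ℝ X (fun x => h x μ) := by
    rintro μ ⟨h1, -⟩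
    refine ⟨hXcv, ?_⟩
    intro x hx y hy a b ha hb hab
    have e1 := hf.2 (Set.mem_univ x) (Set.mem_univ y) ha hb hab
    have e2 : ∑ s, μ s * (g (a • x + b • y) s + δ s) ≤
        ∑ s, (a * (μ s * (g x s + δ s)) + b * (μ s * (g y s + δ s))) := by
      refine Finset.sum_le_sum fun s _ => ?_
      have e3 := (hg s).2 (Set.mem_univ x) (Set.mem_univ y) ha hb hab
      simp only [smul_eq_mul] at e3
      have e4 : g (a • x + b • y) s + δ s ≤ a * (g x s + δ s) + b * (g y s + δ s) := by
        have : δ s = a * δ s + b * δ s := by rw [← add_mul, hab, one_mul]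
        linarith
      have := mul_le_mul_of_nonneg_left e4 (h1 s)
      linarith
    rw [Finset.sum_add_distrib, ← Finset.mul_sum, ← Finset.mul_sum] at e2
    simp only [smul_eq_mul] at e1
    simp only [h, smul_eq_mul]
    linarith
  have hccv : ∀ x, ConcaveOn ℝ D (fun μ => h x μ) := by
    intro x
    refine ⟨hDcv, ?_⟩
    intro μ _ ν _ a b ha hb hab
    apply le_of_eq
    have e : ∑ s, (a • μ + b • ν) s * (g x s + δ s) =
        a * ∑ s, μ s * (g x s + δ s) + b * ∑ s, ν s * (g x s + δ s) := by
      rw [Finset.mul_sum, Finset.mul_sum, ← Finset.sum_add_distrib]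
      refine Finset.sum_congr rfl fun s _ => ?_
      simp only [Pi.add_apply, Pi.smul_apply, smul_eq_mul]
      ring
    simp only [h, smul_eq_mul]
    rw [e]
    linear_combination (f x) * hab
  obtain ⟨a, haX, μ₀, hμ₀, hsad⟩ := Sion.exists_isSaddlePointOn (f := h) hXne hXcv hXcp
    (fun μ _ => (hhc μ).continuousOn.lowerSemicontinuousOn)
    (fun μ hμ => (hcvx μ hμ).quasiconvexOn)
    hDcv ⟨0, h0D⟩ hDcp
    (fun x _ => (hhc2 x).continuousOn.upperSemicontinuousOn)
    (fun x _ => (hccv x).quasiconcaveOn)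
  have hkey : ∀ x ∈ X, f xstar + M * ρstar ≤ h x μ₀ := by
    intro x hx
    obtain ⟨s, hs⟩ := Finite.exists_max (fun s => g a s + δ s)
    have h1 := hmin a (max 0 (g a s + δ s)) haX (le_max_left _ _)
      (fun t => (hs t).trans (le_max_right _ _))
    refine h1.trans ?_
    rcases le_total (g a s + δ s) 0 with h2 | h2
    · rw [max_eq_left h2]
      have := hsad x hx 0 h0D
      simpa [h] using this
    · rw [max_eq_right h2]
      have hm : (Pi.single s M : S → ℝ) ∈ D := by
        refine ⟨fun t => ?_, ?_⟩
        · by_cases ht : t = s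
          · subst ht; simpa using hM.le
          · simp [ht]
        · simp
      have := hsad x hx _ hm
      simpa [h, Pi.single_apply] using this
  have hle : ∀ μ ∈ D, q μ + ∑ s, μ s * δ s ≤ f xstar + M * ρstar := by
    intro μ hμ
    have hbdd : BddBelow {y | ∃ x ∈ X, f x + ∑ s, μ s * g x s = y} := by
      have hc : Continuous (fun x => f x + ∑ s, μ s * g x s) :=
        hfc.add (continuous_finset_sum _ fun s _ => continuous_const.mul (hgc s))
      exact (hXcp.image hc).bddBelow
    have h1 : q μ ≤ f xstar + ∑ s, μ s * g xstar s := by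
      rw [hq]
      exact csInf_le hbdd ⟨xstar, hxX, rfl⟩
    have h2 : ∑ s, μ s * (g xstar s + δ s) ≤ M * ρstar := by
      calc _ ≤ ∑ s, μ s * ρstar :=
            Finset.sum_le_sum fun s _ => mul_le_mul_of_nonneg_left (hxg s) (hμ.1 s)
        _ = (∑ s, μ s) * ρstar := by rw [Finset.sum_mul]
        _ ≤ _ := mul_le_mul_of_nonneg_right hμ.2 hρ0
    have h3 := hh xstar μ
    simp only [h] at h3
    linarith
  have hge : f xstar + M * ρstar ≤ q μ₀ + ∑ s, μ₀ s * δ s := by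
    have : f xstar + M * ρstar - ∑ s, μ₀ s * δ s ≤ q μ₀ := by
      rw [hq]
      refine le_csInf ⟨_, xstar, hxX, rfl⟩ ?_
      rintro y ⟨x, hx, rfl⟩
      have h1 := hkey x hx
      rw [hh] at h1
      linarith
    linarith
  symm
  apply IsGreatest.csSup_eq
  refine ⟨⟨μ₀, hμ₀, le_antisymm (hle μ₀ hμ₀) hge⟩, ?_⟩
  rintro y ⟨μ, hμ, rfl⟩
  exact hle μ hμ
end

section
/- Let G be a connected simple undirected graph on the finite vertex set {1,…,N} with neighbor sets N_i, let S be a nonempty finite index set, M > 0, and for each i let X_i ⊆ ℝ^{n_i} be nonempty, compact and convex, f_i : ℝ^{n_i} → ℝ be convex, g_i : ℝ^{n_i} → ℝ^S have every component convex, and define q_i(μ) := inf_{x ∈ X_i} ( f_i(x) + ⟨μ, g_i(x)⟩ ). For λ : {1,…,N} × {1,…,N} → ℝ^S define η(λ) := ∑_{i=1}^N sup_{μ ∈ Δ_M} ( q_i(μ) + ⟨μ, ∑_{j ∈ N_i} ( λ(i,j) − λ(j,i) )⟩ ). Then the infimum of η over all such λ is attained at some λ*, and inf_λ η(λ) = sup{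 ∑_{i=1}^N q_i(μ) : μ ∈ Δ_M }. -/
open Finset in
/-- Flow on a connected graph: every balanced vector is a divergence. -/
theorem aux_flow {V S : Type} [Fintype V] [DecidableEq V] (G : SimpleGraph V) [DecidableRel G.Adj]
    (hG : G.Connected) (v : V → S → ℝ) (hv : ∀ s, ∑ i, v i s = 0) :
    ∃ lam : V → V → S → ℝ, ∀ i s, ∑ j ∈ G.neighborFinset i, (lam i j s - lam j i s) = v i s := by
  have key : ∀ a b : V, G.Reachable a b → ∀ w : S → ℝ, ∃ lam : V → V → S → ℝ, ∀ i s,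
      ∑ j ∈ G.neighborFinset i, (lam i j s - lam j i s)
        = (if i = a then w s else 0) - (if i = b then w s else 0) := by
    rintro a b ⟨p⟩ w
    induction p with
    | nil => exact ⟨0, by simp⟩
    | @cons a b c h p ih =>
      obtain ⟨l, hl⟩ := ih
      refine ⟨fun i j s => l i j s + if i = a ∧ j = b then w s else 0, fun i s => ?_⟩
      have e : ∀ j, (l i j s + if i = a ∧ j = b then w s else 0) -
          (l j i s + if j = a ∧ i = b then w s else 0) = (l i j s - l j i s) +
          ((if j = b then (if i = a then w s else 0) else 0) -
            (if j = a then (if i = b then w s else 0) else 0)) := by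
        intro j
        rw [ite_and, ite_and]
        split_ifs <;> ring
      rw [Finset.sum_congr rfl (fun j _ => e j), Finset.sum_add_distrib, hl,
        Finset.sum_sub_distrib, Finset.sum_ite_eq', Finset.sum_ite_eq']
      have h1 : (if b ∈ G.neighborFinset i then (if i = a then w s else 0) else 0)
          = if i = a then w s else 0 := by
        by_cases h1 : i = a
        · subst h1; simp [h]
        · simp [h1]
      have h2 : (if a ∈ G.neighborFinset i then (if i = b then w s else 0) else 0)
          = if i = b then w s else 0 := by
        by_cases h1 : i = b
        · subst h1; simp [h.symm]
        · simp [h1]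
      rw [h1, h2]; ring
  obtain ⟨i0⟩ := hG.nonempty
  choose l hl using fun a : V => key a i0 (hG.preconnected a i0) (v a)
  refine ⟨fun i j s => ∑ a, l a i j s, fun i s => ?_⟩
  simp only [← Finset.sum_sub_distrib]
  rw [Finset.sum_comm, Finset.sum_congr rfl (fun a _ => hl a i s)]
  rw [Finset.sum_sub_distrib]
  by_cases h : i = i0 <;> simp [h, hv]

theorem aux_balance {V S : Type} [Fintype V] (G : SimpleGraph V) [DecidableRel G.Adj]
    (lam : V → V → S → ℝ) (s : S) :
    ∑ i, ∑ j ∈ G.neighborFinset i, (lam i j s - lam j i s) = 0 := by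
  have e : ∀ i, ∑ j ∈ G.neighborFinset i, (lam i j s - lam j i s)
      = ∑ j, if G.Adj i j then (lam i j s - lam j i s) else 0 := by
    intro i
    rw [← Finset.sum_filter]
    apply Finset.sum_congr _ (fun _ _ => rfl)
    ext j; simp
  have h : ∑ i, ∑ j, (if G.Adj i j then (lam i j s - lam j i s) else 0)
      = -∑ i, ∑ j, (if G.Adj i j then (lam i j s - lam j i s) else 0) := by
    conv_lhs => rw [Finset.sum_comm]
    simp only [← Finset.sum_neg_distrib]
    refine Finset.sum_congr rfl fun i _ => Finset.sum_congr rfl fun j _ => ?_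
    by_cases h : G.Adj i j
    · simp [h, h.symm]
    · have : ¬ G.Adj j i := fun h' => h h'.symm
      simp [h, this]
  rw [Finset.sum_congr rfl (fun i _ => e i)]
  linarith

/-- The dual function is concave. -/
theorem aux_concave {S E : Type} [Fintype S] [TopologicalSpace E] (X : Set E) (hne : X.Nonempty)
    (hcp : IsCompact X) (f : E → ℝ) (g : E → S → ℝ) (hf : Continuous f)
    (hg : ∀ s, Continuous fun x => g x s) (q : (S → ℝ) → ℝ)
    (hq : ∀ μ : S → ℝ, q μ = sInf {y | ∃ x ∈ X, f x + ∑ s, μ s * g x s = y}) :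
    ConcaveOn ℝ Set.univ q := by
  have hb : ∀ μ : S → ℝ, BddBelow {y | ∃ x ∈ X, f x + ∑ s, μ s * g x s = y} := by
    intro μ
    have : Continuous fun x => f x + ∑ s, μ s * g x s := by fun_prop
    exact (hcp.image this).bddBelow
  refine ⟨convex_univ, ?_⟩
  intro μ _ ν _ a b ha hb' hab
  rw [hq (a • μ + b • ν)]
  obtain ⟨x0, hx0⟩ := hne
  refine le_csInf ⟨_, x0, hx0, rfl⟩ ?_
  rintro y ⟨x, hx, rfl⟩
  have h1 : q μ ≤ f x + ∑ s, μ s * g x s := by rw [hq]; exact csInf_le (hb μ) ⟨x, hx, rfl⟩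
  have h2 : q ν ≤ f x + ∑ s, ν s * g x s := by rw [hq]; exact csInf_le (hb ν) ⟨x, hx, rfl⟩
  have e : f x + ∑ s, (a • μ + b • ν) s * g x s
      = a * (f x + ∑ s, μ s * g x s) + b * (f x + ∑ s, ν s * g x s) := by
    have : ∑ s, (a • μ + b • ν) s * g x s
      = a * ∑ s, μ s * g x s + b * ∑ s, ν s * g x s := by
      rw [Finset.mul_sum, Finset.mul_sum, ← Finset.sum_add_distrib]
      refine Finset.sum_congr rfl fun s _ => ?_
      simp; ring
    rw [this]
    linear_combination (-f x) * hab
  rw [e]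
  simp only [smul_eq_mul]
  gcongr

/-- Splitting of the supergradient. -/
theorem aux_split {V S : Type} [Fintype V] [DecidableEq V] [Fintype S] (i0 : V)
    (D : Set (S → ℝ)) (hD : Convex ℝ D) (hDne : D.Nonempty)
    (q : V → (S → ℝ) → ℝ) (hq : ∀ i, ConcaveOn ℝ Set.univ (q i)) (hqc : ∀ i, Continuous (q i))
    (c : ℝ) (hc : ∀ μ ∈ D, ∑ i, q i μ ≤ c) :
    ∃ v : V → S → ℝ, (∀ s, ∑ i, v i s = 0) ∧
      ∀ m : V → S → ℝ, (∀ i, m i ∈ D) → ∑ i, (q i (m i) + ∑ s, m i s * v i s) ≤ c := by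
  let C : Set ((V → S → ℝ) × ℝ) := {z | ∃ μ ∈ D, z.2 < ∑ i, q i (μ + z.1 i)}
  have hCo : IsOpen C := by
    have : C = ⋃ μ ∈ D, {z | z.2 < ∑ i, q i (μ + z.1 i)} := by ext z; simp [C]
    rw [this]
    refine isOpen_biUnion fun μ _ => isOpen_lt (by fun_prop) ?_
    refine continuous_finsetSum _ fun i _ => (hqc i).comp (by fun_prop)
  have hCc : Convex ℝ C := by
    rintro ⟨d, t⟩ ⟨μ, hμ, h1⟩ ⟨e, u⟩ ⟨ν, hν, h2⟩ a b ha hb hab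
    refine ⟨a • μ + b • ν, hD hμ hν ha hb hab, ?_⟩
    have h3 : a * ∑ i, q i (μ + d i) + b * ∑ i, q i (ν + e i)
        ≤ ∑ i, q i (a • μ + b • ν + (a • d + b • e) i) := by
      rw [Finset.mul_sum, Finset.mul_sum, ← Finset.sum_add_distrib]
      refine Finset.sum_le_sum fun i _ => ?_
      have := (hq i).2 (Set.mem_univ (μ + d i)) (Set.mem_univ (ν + e i)) ha hb hab
      have e1 : a • μ + b • ν + (a • d + b • e) i = a • (μ + d i) + b • (ν + e i) := by
        simp only [Pi.add_apply, Pi.smul_apply, smul_add]; abel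
      rw [e1]; simpa using this
    refine lt_of_lt_of_le ?_ h3
    simp only [Prod.smul_mk, Prod.mk_add_mk, smul_eq_mul]
    simp only at h1 h2
    rcases ha.eq_or_lt with rfl | ha
    · have : b = 1 := by linarith
      subst this; simpa using h2
    · have := mul_lt_mul_of_pos_left h1 ha
      have := mul_le_mul_of_nonneg_left h2.le hb
      linarith
  have hn : ((0 : V → S → ℝ), c) ∉ C := by
    rintro ⟨μ, hμ, h⟩
    have := hc μ hμ
    simp at h
    linarith
  obtain ⟨φ, hφ⟩ := geometric_hahn_banach_open_point hCc hCo hn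
  have hdec : ∀ d t, φ (d, t) = φ (d, 0) + t * φ (0, 1) := by
    intro d t
    have : (d, t) = (d, (0:ℝ)) + t • ((0 : V → S → ℝ), (1:ℝ)) := by simp
    rw [this, map_add, map_smul, smul_eq_mul]
  set β := φ (0, 1) with hβ
  have h00 : φ ((0 : V → S → ℝ), (0:ℝ)) = 0 := by
    have : ((0 : V → S → ℝ), (0:ℝ)) = 0 := rfl
    rw [this, map_zero]
  have hβ0 : 0 < β := by
    obtain ⟨μ, hμ⟩ := hDne
    have := hφ (0, ∑ i, q i μ - 1) ⟨μ, hμ, by simp⟩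
    rw [hdec, hdec 0 c, h00] at this
    have h1 := hc μ hμ
    by_contra hneg
    push Not at hneg
    nlinarith
  have main : ∀ μ ∈ D, ∀ d : V → S → ℝ, φ (d, 0) + β * ∑ i, q i (μ + d i) ≤ β * c := by
    intro μ hμ d
    by_contra hcon
    push Not at hcon
    set Q := ∑ i, q i (μ + d i)
    set ε := (φ (d, 0) + β * Q - β * c) / β
    have hε : 0 < ε := div_pos (by linarith) hβ0
    have hεβ : ε * β = φ (d, 0) + β * Q - β * c := div_mul_cancel₀ _ hβ0.ne'
    have := hφ (d, Q - ε) ⟨μ, hμ, by simp only [Q]; linarith⟩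
    rw [hdec, hdec 0 c, h00] at this
    nlinarith
  -- coordinates of the functional
  let p : V → S → ℝ := by
    classical exact fun i s => φ (Pi.single i (Pi.single s 1), 0) / β
  have hp : ∀ d : V → S → ℝ, φ (d, 0) = β * ∑ i, ∑ s, d i s * p i s := by
    classical
    intro d
    have : (d, (0:ℝ)) = ∑ i, ∑ s, d i s • ((Pi.single i (Pi.single s 1) : V → S → ℝ), (0:ℝ)) := by
      refine Prod.ext ?_ ?_
      · simp only [Prod.fst_sum, Prod.smul_mk]
        ext i s
        simp [Finset.sum_apply, Pi.single_apply, Finset.sum_ite_eq, ite_apply]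
      · simp [Prod.snd_sum]
    rw [this, map_sum, Finset.mul_sum]
    refine Finset.sum_congr rfl fun i _ => ?_
    rw [map_sum, Finset.mul_sum]
    refine Finset.sum_congr rfl fun s _ => ?_
    rw [map_smul, smul_eq_mul]
    simp only [p]
    have : Classical.decEq V = (inferInstance : DecidableEq V) := Subsingleton.elim _ _
    field_simp
  refine ⟨fun i s => p i s - if i = i0 then ∑ k, p k s else 0, fun s => by simp, fun m hm => ?_⟩
  have h := main (m i0) (hm i0) (fun i => m i - m i0)
  rw [hp, ← mul_add] at h
  have h := le_of_mul_le_mul_left h hβ0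
  simp only [add_sub_cancel] at h
  refine le_trans (le_of_eq ?_) h
  rw [Finset.sum_add_distrib, add_comm]
  congr 1
  simp only [Pi.sub_apply, mul_sub, sub_mul, Finset.sum_sub_distrib]
  congr 1
  rw [Finset.sum_comm]
  conv_rhs => rw [Finset.sum_comm]
  refine Finset.sum_congr rfl fun s _ => ?_
  simp [Finset.mul_sum]

/-- Lemma 4 of the paper.
The second dual function `η(λ) = ∑_i sup_{μ ∈ Δ_M} (q_i μ + ⟨μ, ∑_{j∈N_i}(λ_{ij} − λ_{ji})⟩)`
attains its infimum at some `λ*`, and the optimal value equals the optimal value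
of the restricted dual problem `sup {∑_i q_i μ : μ ∈ Δ_M}`. -/
theorem stmt_17 {N : ℕ} {S : Type} [Fintype S] [Nonempty S]
    (G : SimpleGraph (Fin N)) [DecidableRel G.Adj] (hG : G.Connected)
    (M : ℝ) (hM : 0 < M) (n : Fin N → ℕ)
    (X : ∀ i, Set (Fin (n i) → ℝ))
    (hXne : ∀ i, (X i).Nonempty) (hXcp : ∀ i, IsCompact (X i)) (hXcv : ∀ i, Convex ℝ (X i))
    (f : ∀ i, (Fin (n i) → ℝ) → ℝ) (hf : ∀ i, ConvexOn ℝ Set.univ (f i))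
    (g : ∀ i, (Fin (n i) → ℝ) → (S → ℝ))
    (hg : ∀ i s, ConvexOn ℝ Set.univ (fun x => g i x s))
    (q : Fin N → (S → ℝ) → ℝ)
    (hq : ∀ i (μ : S → ℝ), q i μ = sInf {y | ∃ x ∈ X i, f i x + ∑ s, μ s * g i x s = y})
    (η : (Fin N → Fin N → (S → ℝ)) → ℝ)
    (hη : ∀ lam : Fin N → Fin N → (S → ℝ),
      η lam = ∑ i, sSup {y | ∃ μ : S → ℝ, ((∀ s, 0 ≤ μ s) ∧ ∑ s, μ s ≤ M) ∧
        q i μ + ∑ s, μ s * (∑ j ∈ G.neighborFinset i, (lam i j s - lam j i s)) = y}) :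
    ∃ lamstar : Fin N → Fin N → (S → ℝ),
      (∀ lam : Fin N → Fin N → (S → ℝ), η lamstar ≤ η lam)
      ∧ η lamstar
          = sSup {y | ∃ μ : S → ℝ, ((∀ s, 0 ≤ μ s) ∧ ∑ s, μ s ≤ M) ∧ ∑ i, q i μ = y} := by
  have hqcv : ∀ i, ConcaveOn ℝ Set.univ (q i) := fun i =>
    aux_concave (X i) (hXne i) (hXcp i) (f i) (g i)
      (continuousOn_univ.1 ((hf i).continuousOn isOpen_univ))
      (fun s => continuousOn_univ.1 ((hg i s).continuousOn isOpen_univ)) (q i) (hq i)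
  have hqc : ∀ i, Continuous (q i) := fun i =>
    continuousOn_univ.1 ((hqcv i).continuousOn isOpen_univ)
  let D : Set (S → ℝ) := {μ | (∀ s, 0 ≤ μ s) ∧ ∑ s, μ s ≤ M}
  have hD0 : (0 : S → ℝ) ∈ D := ⟨fun s => le_rfl, by simpa using hM.le⟩
  have hDcv : Convex ℝ D := by
    rintro μ ⟨h1, h2⟩ ν ⟨h3, h4⟩ a b ha hb hab
    refine ⟨fun s => ?_, ?_⟩
    · have := h1 s
      have := h3 s
      simp only [Pi.add_apply, Pi.smul_apply, smul_eq_mul]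
      positivity
    · simp only [Pi.add_apply, Pi.smul_apply, smul_eq_mul, Finset.sum_add_distrib,
        ← Finset.mul_sum]
      have := mul_le_mul_of_nonneg_left h2 ha
      have := mul_le_mul_of_nonneg_left h4 hb
      have : a * M + b * M = M := by rw [← add_mul, hab, one_mul]
      linarith
  have hDcp : IsCompact D := by
    refine (isCompact_Icc (a := (0 : S → ℝ)) (b := fun _ => M)).of_isClosed_subset ?_ ?_
    · have : D = (⋂ s, {μ : S → ℝ | 0 ≤ μ s}) ∩ {μ | ∑ s, μ s ≤ M} := by ext μ; simp [D]
      rw [this]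
      exact (isClosed_iInter fun s => isClosed_le (by fun_prop) (by fun_prop)).inter
        (isClosed_le (by fun_prop) (by fun_prop))
    · rintro μ ⟨h1, h2⟩
      exact ⟨h1, fun s => (Finset.single_le_sum (fun s _ => h1 s) (Finset.mem_univ s)).trans h2⟩
  have hbd : ∀ (lam : Fin N → Fin N → (S → ℝ)) (i : Fin N),
      ∃ m ∈ D, sSup {y | ∃ μ : S → ℝ, ((∀ s, 0 ≤ μ s) ∧ ∑ s, μ s ≤ M) ∧
        q i μ + ∑ s, μ s * (∑ j ∈ G.neighborFinset i, (lam i j s - lam j i s)) = y}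
        = q i m + ∑ s, m s * (∑ j ∈ G.neighborFinset i, (lam i j s - lam j i s)) ∧
        ∀ μ ∈ D, q i μ + ∑ s, μ s * (∑ j ∈ G.neighborFinset i, (lam i j s - lam j i s))
          ≤ q i m + ∑ s, m s * (∑ j ∈ G.neighborFinset i, (lam i j s - lam j i s)) := by
    intro lam i
    have hc : Continuous fun μ : S → ℝ =>
        q i μ + ∑ s, μ s * (∑ j ∈ G.neighborFinset i, (lam i j s - lam j i s)) :=
      (hqc i).add (by fun_prop)
    obtain ⟨m, hm, hmax⟩ := hDcp.exists_isMaxOn ⟨0, hD0⟩ hc.continuousOn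
    refine ⟨m, hm, ?_, fun μ hμ => hmax hμ⟩
    refine IsGreatest.csSup_eq ⟨⟨m, hm, rfl⟩, ?_⟩
    rintro y ⟨μ, hμ, rfl⟩
    exact hmax hμ
  have weak : ∀ lam, ∀ μ ∈ D, ∑ i, q i μ ≤ η lam := by
    intro lam μ hμ
    have e : ∑ i, q i μ = ∑ i, (q i μ +
        ∑ s, μ s * (∑ j ∈ G.neighborFinset i, (lam i j s - lam j i s))) := by
      rw [Finset.sum_add_distrib, Finset.sum_comm (s := Finset.univ) (t := Finset.univ)]
      simp only [← Finset.mul_sum, aux_balance G lam]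
      simp
    rw [e, hη]
    refine Finset.sum_le_sum fun i _ => ?_
    obtain ⟨m, _, h1, h2⟩ := hbd lam i
    rw [h1]; exact h2 μ hμ
  set c := sSup {y | ∃ μ : S → ℝ, ((∀ s, 0 ≤ μ s) ∧ ∑ s, μ s ≤ M) ∧ ∑ i, q i μ = y} with hcdef
  have hc1 : ∀ μ ∈ D, ∑ i, q i μ ≤ c := by
    intro μ hμ
    refine le_csSup ⟨η 0, ?_⟩ ⟨μ, hμ, rfl⟩
    rintro y ⟨ν, hν, rfl⟩
    exact weak 0 ν hν
  have hc2 : ∀ lam, c ≤ η lam := by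
    intro lam
    refine csSup_le ⟨_, 0, hD0, rfl⟩ ?_
    rintro y ⟨ν, hν, rfl⟩
    exact weak lam ν hν
  obtain ⟨i0⟩ := hG.nonempty
  obtain ⟨v, hv0, hv⟩ := aux_split i0 D hDcv ⟨0, hD0⟩ q hqcv hqc c hc1
  obtain ⟨lam, hlam⟩ := aux_flow G hG v hv0
  have hle : η lam ≤ c := by
    choose m hm h1 _ using hbd lam
    rw [hη, Finset.sum_congr rfl (fun i _ => h1 i)]
    simp only [hlam]
    exact hv m hm
  exact ⟨lam, fun l => hle.trans (hc2 l), le_antisymm hle (hc2 lam)⟩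
end

section
/- Consider N ≥ 1 agents on a connected simple undirected graph G with neighbor sets N_i, a nonempty finite index set S, and for each i a nonempty compact convex set X_i ⊆ ℝ^{n_i}, a convex function f_i : ℝ^{n_i} → ℝ and a map g_i : ℝ^{n_i} → ℝ^S with every component convex. Assume: (a) there exist x̄_i ∈ X_i with ∑_i g_i(x̄_i) ≺ 0 componentwise (Slater condition), and let f* := inf{ ∑_i f_i(x_i) : x_i ∈ X_i, ∑_i g_i(x_i) ⪯ 0 }; (b) there exists μ* ∈ ℝ^S with μ* ⪰ 0 and inf{ ∑_i ( f_i(x_i) + ⟨μ*, g_i(x_i)⟩ ) : x_i ∈ X_i for all i } = f*, and M > ∑_s μ*_s; (c) step sizes γ^t ≥ 0 satisfy ∑_{t=0}^∞ γ^t = ∞ and ∑_{t=0}^∞ (γ^t)² < ∞. Suppose sequences λ^t : {1,…,N} × {1,…,N} → ℝ^S (with arbitrary λ^0), x_i^{t+1} ∈ ℝ^{n_i}, ρ_i^{t+1} ∈ ℝ and μ_i^{t+1} ∈ Δ_M satisfy for every t and every i, with δ_i^t := ∑_{j ∈ N_i} ( λ^t(i,j) − λ^t(j,i) ): (1) (x_i^{t+1},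 ρ_i^{t+1}) minimizes (x,ρ) ↦ f_i(x) + M ρ over { x ∈ X_i, ρ ≥ 0, g_i(x) + δ_i^t ⪯ ρ·𝟏 }; (2) μ_i^{t+1} maximizes μ ↦ q_i(μ) + ⟨μ, δ_i^t⟩ over Δ_M, where q_i(μ) := inf_{x ∈ X_i} ( f_i(x) + ⟨μ, g_i(x)⟩ ); (3) λ^{t+1}(i,j) = λ^t(i,j) − γ^t ( μ_i^{t+1} − μ_j^{t+1} ) for all adjacent pairs (i,j), and λ^{t+1}(i,j) = λ^t(i,j) otherwise. Then every cluster point (x̄_1,…,x̄_N) of the sequence (x_1^t,…,x_N^t) is an optimal solution of the original problem: x̄_i ∈ X_i for all i, ∑_i g_i(x̄_i) ⪯ 0, and ∑_i f_i(x̄_i) = f*. -/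
open Filter Topology

lemma nonpos_of_lin {a c B : ℝ} (h : ∀ k : ℝ, 0 ≤ k → a + k * c < B) : c ≤ 0 := by
  by_contra hc
  push Not at hc
  have h0 := h 0 le_rfl
  have := h ((B - a) / c) (by apply div_nonneg <;> linarith)
  rw [div_mul_cancel₀ _ hc.ne'] at this
  linarith

lemma dual_exists {S : Type} [Fintype S] {E : Type} [AddCommGroup E] [Module ℝ E]
    (X : Set E) (hne : X.Nonempty) (hX : Convex ℝ X) (f : E → ℝ) (hf : ConvexOn ℝ Set.univ f)
    (h : E → S → ℝ) (hh : ∀ s, ConvexOn ℝ Set.univ (fun x => h x s)) (M P : ℝ)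
    (hP : ∀ x ∈ X, ∀ r : ℝ, 0 ≤ r → (∀ s, h x s ≤ r) → P ≤ f x + M * r) :
    ∃ ν : S → ℝ, (∀ s, 0 ≤ ν s) ∧ ∑ s, ν s ≤ M ∧ ∀ x ∈ X, P ≤ f x + ∑ s, ν s * h x s := by
  classical
  let A : Set ((S → ℝ) × ℝ) :=
    {p | ∃ x ∈ X, ∃ r : ℝ, 0 ≤ r ∧ (∀ s, h x s - r < p.1 s) ∧ f x + M * r < p.2}
  have hAo : IsOpen A := by
    have : A = ⋃ x ∈ X, ⋃ r ∈ Set.Ici (0:ℝ),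
        ((⋂ s, {p : (S → ℝ) × ℝ | h x s - r < p.1 s}) ∩ {p | f x + M * r < p.2}) := by
      ext p
      simp only [A, Set.mem_setOf_eq, Set.mem_iUnion, Set.mem_inter_iff, Set.mem_iInter, Set.mem_Ici, exists_prop]
    rw [this]
    refine isOpen_biUnion fun x _ => isOpen_biUnion fun r _ => ?_
    refine (isOpen_iInter_of_finite fun s => ?_).inter ?_
    · exact isOpen_lt (by fun_prop) (by fun_prop)
    · exact isOpen_lt (by fun_prop) (by fun_prop)
  have hAc : Convex ℝ A := by
    rintro p ⟨x, hx, r, hr, h1, h2⟩ p' ⟨x', hx', r', hr', h1', h2'⟩ a b ha hb hab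
    refine ⟨a • x + b • x', hX hx hx' ha hb hab, a * r + b * r', by positivity, ?_, ?_⟩
    · intro s
      have e := (hh s).2 (Set.mem_univ x) (Set.mem_univ x') ha hb hab
      have e1 := h1 s
      have e2 := h1' s
      simp only [smul_eq_mul, Prod.fst_add, Prod.smul_fst, Pi.add_apply, Pi.smul_apply] at e ⊢
      rcases ha.eq_or_lt with rfl | ha
      · have : b = 1 := by linarith
        subst this
        linarith
      · nlinarith [mul_lt_mul_of_pos_left e1 ha, mul_le_mul_of_nonneg_left e2.le hb]
    · have e := hf.2 (Set.mem_univ x) (Set.mem_univ x') ha hb hab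
      simp only [smul_eq_mul, Prod.snd_add, Prod.smul_snd] at e ⊢
      rcases ha.eq_or_lt with rfl | ha
      · have : b = 1 := by linarith
        subst this
        linarith
      · nlinarith [mul_lt_mul_of_pos_left h2 ha, mul_le_mul_of_nonneg_left h2'.le hb]
  have hAn : ((0 : S → ℝ), P) ∉ A := by
    rintro ⟨x, hx, r, hr, h1, h2⟩
    have := hP x hx r hr (fun s => by have := h1 s; simp at this; linarith)
    simp at h2
    linarith
  obtain ⟨F, hF⟩ := geometric_hahn_banach_open_point hAc hAo hAn
  set c : S → ℝ := fun s => F (Pi.single s 1, 0) with hc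
  set α : ℝ := F (0, 1) with hα
  have hFe : ∀ (u : S → ℝ) (b : ℝ), F (u, b) = ∑ s, u s * c s + b * α := by
    intro u b
    have e : (u, b) = ∑ s, u s • ((Pi.single s 1 : S → ℝ), (0:ℝ)) + b • ((0 : S → ℝ), (1:ℝ)) := by
      ext s
      · simp [Prod.fst_sum, Finset.sum_apply, Pi.single_apply]
      · simp [Prod.snd_sum]
    rw [e]
    simp only [map_add, map_sum, map_smul, smul_eq_mul, hc, hα]
  have key : ∀ u b, (u, b) ∈ A → ∑ s, u s * c s + b * α < P * α := by
    intro u b hub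
    have := hF _ hub
    rw [hFe, hFe] at this
    simpa using this
  obtain ⟨x0, hx0⟩ := hne
  have hc0 : ∀ s, c s ≤ 0 := by
    intro s
    apply nonpos_of_lin (a := ∑ s, (h x0 s + 1) * c s + (f x0 + 1) * α) (B := P * α)
    intro k hk
    have := key (fun s' => h x0 s' + 1 + k * (Pi.single s 1 : S → ℝ) s') (f x0 + 1)
      ⟨x0, hx0, 0, le_rfl, fun s' => by
        have : 0 ≤ (Pi.single s 1 : S → ℝ) s' := by
          by_cases hs : s' = s <;> simp [hs]
        have := mul_nonneg hk this
        simp only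
        linarith, by simp⟩
    have e : ∑ s', (h x0 s' + 1 + k * (Pi.single s 1 : S → ℝ) s') * c s'
        = ∑ s', (h x0 s' + 1) * c s' + k * c s := by
      simp only [add_mul _ (k * _), Finset.sum_add_distrib]
      congr 1
      simp [Pi.single_apply]
    rw [e] at this
    linarith
  have hr0 : ∃ r : ℝ, 0 ≤ r ∧ ∀ s, h x0 s < r := by
    refine ⟨∑ s, |h x0 s| + 1, by positivity, fun s => ?_⟩
    have := Finset.single_le_sum (f := fun s => |h x0 s|) (fun _ _ => abs_nonneg _) (Finset.mem_univ s)
    have := le_abs_self (h x0 s)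
    linarith
  obtain ⟨r0, hr0, hr0'⟩ := hr0
  have hα0 : α < 0 := by
    have hk : ∀ k : ℝ, 0 ≤ k → (f x0 + M * r0 + 1 + k) * α < P * α := by
      intro k hk
      have := key 0 (f x0 + M * r0 + 1 + k) ⟨x0, hx0, r0, hr0, fun s => by
        have := hr0' s
        simp; linarith, by simp only; linarith⟩
      simpa using this
    have h1 : α ≤ 0 := by
      apply nonpos_of_lin (a := (f x0 + M * r0 + 1) * α) (B := P * α)
      intro k hk'
      have := hk k hk'
      linarith
    have h2 := hk 0 le_rfl
    rcases h1.eq_or_lt with h | h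
    · simp [h] at h2
    · exact h
  have hmain : ∀ x ∈ X, ∀ r : ℝ, 0 ≤ r →
      P ≤ f x + M * r + ∑ s, (c s / α) * (h x s - r) := by
    intro x hx r hr
    have hε : ∀ ε : ℝ, 0 < ε → P ≤ f x + M * r + ∑ s, (c s / α) * (h x s - r)
        + ε * (1 + ∑ s, c s / α) := by
      intro ε hε
      have := key (fun s => h x s - r + ε) (f x + M * r + ε) ⟨x, hx, r, hr, by simp [hε], by simp [hε]⟩
      have e : ∑ s, (h x s - r + ε) * c s
          = α * (∑ s, (c s / α) * (h x s - r) + ε * ∑ s, c s / α) := by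
        rw [Finset.mul_sum, ← Finset.sum_add_distrib, Finset.mul_sum]
        refine Finset.sum_congr rfl fun s _ => ?_
        field_simp [hα0.ne]
      rw [e] at this
      by_contra hcon
      push Not at hcon
      nlinarith [mul_lt_mul_of_neg_left hcon hα0]
    have hs : 0 ≤ ∑ s, c s / α := Finset.sum_nonneg fun s _ => div_nonneg_of_nonpos (hc0 s) hα0.le
    apply le_of_forall_pos_le_add
    intro ε hε'
    have := hε (ε / (1 + ∑ s, c s / α)) (by positivity)
    rwa [div_mul_cancel₀ _ (by positivity)] at this
  refine ⟨fun s => c s / α, fun s => div_nonneg_of_nonpos (hc0 s) hα0.le, ?_, ?_⟩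
  · have : (∑ s, c s / α - M) ≤ 0 := by
      apply nonpos_of_lin (a := P) (B := f x0 + ∑ s, (c s / α) * h x0 s + 1)
      intro k hk
      have := hmain x0 hx0 k hk
      simp only [mul_sub, Finset.sum_sub_distrib, ← Finset.sum_mul] at this
      linarith
    linarith
  · intro x hx
    have := hmain x hx 0 le_rfl
    simpa using this

lemma real_conv (γ a : ℕ → ℝ) (C : ℝ) (hC : 0 ≤ C) (hγ : ∀ t, 0 ≤ γ t) (ha : ∀ t, 0 ≤ a t)
    (hdiv : Tendsto (fun T => ∑ t ∈ Finset.range T, γ t) atTop atTop)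
    (hsq : Summable (fun t => (γ t) ^ 2))
    (hs : Summable (fun t => γ t * a t))
    (hstep : ∀ t, a (t+1) ≤ a t + C * γ t) : Tendsto a atTop (𝓝 0) := by
  have hγ0 : Tendsto γ atTop (𝓝 0) := by
    have := hsq.tendsto_atTop_zero
    have h2 := (Real.continuous_sqrt.tendsto 0).comp this
    simpa [Function.comp_def, Real.sqrt_sq (hγ _)] using h2
  have main : ∀ ε : ℝ, 0 < ε → ∀ᶠ n in atTop, a n ≤ (2 + C) * ε := by
    intro ε hε
    have hA := hs.hasSum.tendsto_sum_nat
    set A : ℕ → ℝ := fun n => ∑ t ∈ Finset.range n, γ t * a t with hAdef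
    set L := ∑' t, γ t * a t
    have hAL : ∀ n, A n ≤ L := fun n => hs.sum_le_tsum _ (fun t _ => mul_nonneg (hγ t) (ha t))
    have e1 : ∀ᶠ n in atTop, L - ε^2 < A n := hA.eventually (lt_mem_nhds (by nlinarith [sq_pos_of_pos hε]))
    have e2 : ∀ᶠ n in atTop, C * γ n < ε := by
      have := hγ0.const_mul C
      rw [mul_zero] at this
      exact this.eventually (gt_mem_nhds hε)
    obtain ⟨T0, hT0⟩ := eventually_atTop.1 (e1.and e2)
    have hex : ∃ T ≥ T0, a T ≤ ε := by
      by_contra hcon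
      push Not at hcon
      have hb : ∀ n ≥ T0, ∑ t ∈ Finset.range n, γ t ≤
          ∑ t ∈ Finset.range T0, γ t + (A n - A T0) / ε := by
        intro n hn
        induction n, hn using Nat.le_induction with
        | base => simp
        | succ n hn ih =>
          have h1 : A (n+1) = A n + γ n * a n := Finset.sum_range_succ _ _
          rw [Finset.sum_range_succ, h1]
          have : γ n ≤ γ n * a n / ε := by
            rw [le_div_iff₀ hε]
            exact mul_le_mul_of_nonneg_left (hcon n hn).le (hγ n)
          have e : (A n + γ n * a n - A T0) / ε = (A n - A T0) / ε + γ n * a n / ε := by ring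
          rw [e]; linarith
      obtain ⟨n, hn⟩ := eventually_atTop.1 (hdiv.eventually_gt_atTop
        (∑ t ∈ Finset.range T0, γ t + (L - A T0) / ε))
      have h1 := hn (max n T0) (le_max_left _ _)
      have h2 := hb (max n T0) (le_max_right _ _)
      have h3 : (A (max n T0) - A T0) / ε ≤ (L - A T0) / ε := by
        gcongr; exact hAL _
      linarith
    obtain ⟨T, hT, haT⟩ := hex
    have hmain : ∀ n ≥ T, a n ≤ 2 * ε + C / ε * (A n - A T) := by
      intro n hn
      induction n, hn using Nat.le_induction with
      | base => simp; linarith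
      | succ n hn ih =>
        have h1 : A (n+1) = A n + γ n * a n := Finset.sum_range_succ _ _
        have hmono : A T ≤ A n :=
          Finset.sum_le_sum_of_subset_of_nonneg (Finset.range_mono hn)
            (fun t _ _ => mul_nonneg (hγ t) (ha t))
        have hCe : 0 ≤ C / ε := by positivity
        have hga := mul_nonneg (hγ n) (ha n)
        have hst := hstep n
        rw [h1]
        by_cases hle : a n ≤ ε
        · have := (hT0 n (hT.trans hn)).2
          have : 0 ≤ C / ε * (A n + γ n * a n - A T) := mul_nonneg hCe (by linarith)
          linarith
        · push Not at hle
          have : C * γ n ≤ C / ε * (γ n * a n) := by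
            rw [div_mul_eq_mul_div, le_div_iff₀ hε, mul_assoc]
            exact mul_le_mul_of_nonneg_left (mul_le_mul_of_nonneg_left hle.le (hγ n)) hC
          have e : C / ε * (A n + γ n * a n - A T) = C / ε * (A n - A T) + C / ε * (γ n * a n) := by ring
          rw [e]; linarith
    filter_upwards [eventually_ge_atTop T] with n hn
    have h1 := hmain n hn
    have h2 := (hT0 T hT).1
    have h3 : C / ε * (A n - A T) ≤ C / ε * ε^2 := by
      gcongr
      linarith [hAL n]
    have h4 : C / ε * ε^2 = C * ε := by field_simp
    linarith
  rw [Metric.tendsto_atTop]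
  intro η hη
  obtain ⟨n0, hn0⟩ := eventually_atTop.1 (main (η / (2 * (2 + C))) (by positivity))
  refine ⟨n0, fun n hn => ?_⟩
  have := hn0 n hn
  rw [Real.dist_eq, sub_zero, abs_of_nonneg (ha n)]
  have e : (2 + C) * (η / (2 * (2 + C))) = η / 2 := by field_simp
  linarith

lemma summable_of_descent (γ a W : ℕ → ℝ) (C : ℝ) (hγ : ∀ t, 0 ≤ γ t) (ha : ∀ t, 0 ≤ a t)
    (hC : 0 ≤ C)
    (hW : ∀ t, 0 ≤ W t) (hsq : Summable (fun t => (γ t) ^ 2))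
    (hstep : ∀ t, W (t+1) ≤ W t - 2 * (γ t * a t) + C * γ t ^ 2) :
    Summable (fun t => γ t * a t) := by
  apply summable_of_sum_range_le (c := (W 0 + C * ∑' t, γ t ^ 2) / 2)
    (fun t => mul_nonneg (hγ t) (ha t))
  intro n
  have h : 2 * ∑ t ∈ Finset.range n, γ t * a t + W n ≤ W 0 + C * ∑ t ∈ Finset.range n, γ t ^ 2 := by
    induction n with
    | zero => simp
    | succ n ih =>
      rw [Finset.sum_range_succ, Finset.sum_range_succ]
      have := hstep n
      linarith
  have h2 : ∑ t ∈ Finset.range n, γ t ^ 2 ≤ ∑' t, γ t ^ 2 := hsq.sum_le_tsum _ (fun t _ => sq_nonneg _)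
  have := hW n
  have := mul_le_mul_of_nonneg_left h2 hC
  linarith

/-- connected graphs carry flows with any balanced divergence -/
lemma flow_exists {V : Type} [Fintype V] [DecidableEq V] (G : SimpleGraph V) [DecidableRel G.Adj]
    (hG : G.Connected) (d : V → ℝ) (hd : ∑ i, d i = 0) :
    ∃ l : V → V → ℝ, ∀ i, ∑ j ∈ G.neighborFinset i, (l i j - l j i) = d i := by
  let Lm : (V → V → ℝ) →ₗ[ℝ] (V → ℝ) :=
    { toFun := fun l i => ∑ j ∈ G.neighborFinset i, (l i j - l j i)
      map_add' := by
        intro a b; ext i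
        simp only [Pi.add_apply, ← Finset.sum_add_distrib]
        refine Finset.sum_congr rfl fun j _ => by ring
      map_smul' := by
        intro c a; ext i
        simp only [Pi.smul_apply, smul_eq_mul, RingHom.id_apply, Finset.mul_sum]
        refine Finset.sum_congr rfl fun j _ => by ring }
  have hadj : ∀ u v, G.Adj u v → (Pi.single u 1 - Pi.single v 1 : V → ℝ) ∈ LinearMap.range Lm := by
    intro u v huv
    refine ⟨fun i j => if i = u ∧ j = v then 1 else 0, ?_⟩
    ext i
    have hne := huv.ne
    simp only [Lm, LinearMap.coe_mk, AddHom.coe_mk, Finset.sum_sub_distrib, Pi.sub_apply, Pi.single_apply]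
    congr 1
    · by_cases hi : i = u
      · subst hi; simp [huv]
      · simp [hi]
    · by_cases hi : i = v
      · subst hi; simp [huv.symm]
      · simp [hi]
  have hreach : ∀ u v, G.Walk u v → (Pi.single u 1 - Pi.single v 1 : V → ℝ) ∈ LinearMap.range Lm := by
    intro u v w
    induction w with
    | nil => simp
    | cons h _ ih =>
      have := Submodule.add_mem _ (hadj _ _ h) ih
      simpa using this
  obtain ⟨i0⟩ := hG.nonempty
  have hdr : d ∈ LinearMap.range Lm := by
    have e : d = ∑ i, d i • (Pi.single i 1 - Pi.single i0 1 : V → ℝ) := by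
      ext k
      simp only [Finset.sum_apply, Pi.smul_apply, Pi.sub_apply, smul_eq_mul, mul_sub,
        Finset.sum_sub_distrib, ← Finset.sum_mul, hd]
      simp [Pi.single_apply]
    rw [e]
    exact Submodule.sum_mem _ fun i _ => Submodule.smul_mem _ _ (hreach i i0 (hG.preconnected i i0).some)
  obtain ⟨l, hl⟩ := hdr
  exact ⟨l, fun i => congrFun hl i⟩

lemma sum_adj {V : Type} [Fintype V] (G : SimpleGraph V) [DecidableRel G.Adj]
    (a : V → V → ℝ) (m : V → ℝ) :
    ∑ i, ∑ j ∈ G.neighborFinset i, a i j * (m i - m j)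
      = ∑ i, m i * ∑ j ∈ G.neighborFinset i, (a i j - a j i) := by
  have e : ∀ F : V → V → ℝ, ∑ i, ∑ j ∈ G.neighborFinset i, F i j
      = ∑ i, ∑ j, if G.Adj i j then F i j else 0 := by
    intro F
    refine Finset.sum_congr rfl fun i _ => ?_
    rw [← Finset.sum_filter]
    refine Finset.sum_congr ?_ fun _ _ => rfl
    ext j; simp
  have e2 : ∑ i, ∑ j ∈ G.neighborFinset i, a i j * m j
      = ∑ i, ∑ j ∈ G.neighborFinset i, a j i * m i := by
    rw [e, e, Finset.sum_comm]
    simp only [G.adj_comm]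
  simp only [mul_sub, Finset.sum_sub_distrib, e2, Finset.mul_sum]
  simp only [mul_comm]

/-- Theorem 1(ii) of the paper: primal recovery.
Under the Slater condition, the exact-penalty condition `M > ∑_s μ*_s` on a dual
optimal multiplier `μ*`, and diminishing non-summable square-summable step sizes,
every cluster point of the local primal iterates `(x_1^t,…,x_N^t)` of the
distributed primal decomposition-duality algorithm is a feasible optimal
solution of the original constraint-coupled problem. -/
theorem stmt_19 {N : ℕ} (hN : 1 ≤ N) {S : Type} [Fintype S] [Nonempty S]
    (G : SimpleGraph (Fin N)) [DecidableRel G.Adj] (hG : G.Connected)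
    (n : Fin N → ℕ)
    (X : ∀ i, Set (Fin (n i) → ℝ))
    (hXne : ∀ i, (X i).Nonempty) (hXcp : ∀ i, IsCompact (X i)) (hXcv : ∀ i, Convex ℝ (X i))
    (f : ∀ i, (Fin (n i) → ℝ) → ℝ) (hf : ∀ i, ConvexOn ℝ Set.univ (f i))
    (g : ∀ i, (Fin (n i) → ℝ) → (S → ℝ))
    (hg : ∀ i s, ConvexOn ℝ Set.univ (fun x => g i x s))
    -- (a) Slater condition and optimal value
    (hSlater : ∃ xbar : ∀ i, Fin (n i) → ℝ,
      (∀ i, xbar i ∈ X i) ∧ ∀ s, ∑ i, g i (xbar i) s < 0)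
    (fstar : ℝ)
    (hfstar : fstar = sInf {y | ∃ x : ∀ i, Fin (n i) → ℝ,
      (∀ i, x i ∈ X i) ∧ (∀ s, ∑ i, g i (x i) s ≤ 0) ∧ ∑ i, f i (x i) = y})
    -- (b) geometric multiplier and penalty parameter
    (μstar : S → ℝ) (hμpos : ∀ s, 0 ≤ μstar s)
    (hμopt : sInf {y | ∃ x : ∀ i, Fin (n i) → ℝ, (∀ i, x i ∈ X i) ∧
      (∑ i, (f i (x i) + ∑ s, μstar s * g i (x i) s)) = y} = fstar)
    (M : ℝ) (hM : M > ∑ s, μstar s)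
    -- (c) step sizes
    (γ : ℕ → ℝ) (hγpos : ∀ t, 0 ≤ γ t)
    (hγdiv : Filter.Tendsto (fun T => ∑ t ∈ Finset.range T, γ t) Filter.atTop Filter.atTop)
    (hγsq : Summable (fun t => (γ t) ^ 2))
    -- algorithm iterates
    (lam : ℕ → Fin N → Fin N → (S → ℝ))
    (x : ℕ → ∀ i, Fin (n i) → ℝ) (ρ : ℕ → Fin N → ℝ) (μ : ℕ → Fin N → (S → ℝ))
    -- (1) primal update: (x_i^{t+1}, ρ_i^{t+1}) solves the local relaxed problem
    (hprim : ∀ t i,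
      (x (t+1) i ∈ X i ∧ 0 ≤ ρ (t+1) i ∧
        (∀ s, g i (x (t+1) i) s
          + (∑ j ∈ G.neighborFinset i, (lam t i j s - lam t j i s)) ≤ ρ (t+1) i))
      ∧ ∀ (x' : Fin (n i) → ℝ) (r : ℝ), x' ∈ X i → 0 ≤ r →
          (∀ s, g i x' s + (∑ j ∈ G.neighborFinset i, (lam t i j s - lam t j i s)) ≤ r) →
          f i (x (t+1) i) + M * ρ (t+1) i ≤ f i x' + M * r)
    -- (2) dual update: μ_i^{t+1} maximizes q_i(·) + ⟨·, δ_i^t⟩ over Δ_M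
    (hdual : ∀ t i,
      ((∀ s, 0 ≤ μ (t+1) i s) ∧ ∑ s, μ (t+1) i s ≤ M)
      ∧ ∀ ν : S → ℝ, (∀ s, 0 ≤ ν s) → ∑ s, ν s ≤ M →
          sInf {y | ∃ z ∈ X i, f i z + ∑ s, ν s * g i z s = y}
            + ∑ s, ν s * (∑ j ∈ G.neighborFinset i, (lam t i j s - lam t j i s))
          ≤ sInf {y | ∃ z ∈ X i, f i z + ∑ s, μ (t+1) i s * g i z s = y}
            + ∑ s, μ (t+1) i s * (∑ j ∈ G.neighborFinset i, (lam t i j s - lam t j i s)))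
    -- (3) multiplier update
    (hlam : ∀ t i j, (G.Adj i j →
        lam (t+1) i j = lam t i j - γ t • (μ (t+1) i - μ (t+1) j))
      ∧ (¬ G.Adj i j → lam (t+1) i j = lam t i j)) :
    ∀ xbar : ∀ i, Fin (n i) → ℝ,
      MapClusterPt xbar Filter.atTop (fun t => x t) →
      (∀ i, xbar i ∈ X i) ∧ (∀ s, ∑ i, g i (xbar i) s ≤ 0)
      ∧ ∑ i, f i (xbar i) = fstar := by
  classical
  have hfc : ∀ i, Continuous (f i) := fun i => by
    rw [← continuousOn_univ]; exact (hf i).continuousOn isOpen_univ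
  have hgc : ∀ i s, Continuous (fun z => g i z s) := fun i s => by
    rw [← continuousOn_univ]; exact (hg i s).continuousOn isOpen_univ
  have hM0 : 0 ≤ M := (Finset.sum_nonneg fun s _ => hμpos s).trans hM.le
  set q : ∀ i : Fin N, (S → ℝ) → ℝ := fun i ν =>
    sInf {y | ∃ z ∈ X i, f i z + ∑ s, ν s * g i z s = y} with hq
  set δ : ℕ → Fin N → S → ℝ := fun t i s =>
    ∑ j ∈ G.neighborFinset i, (lam t i j s - lam t j i s) with hδ
  have hLc : ∀ i (ν : S → ℝ), Continuous (fun z => f i z + ∑ s, ν s * g i z s) := fun i ν =>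
    (hfc i).add (continuous_finsetSum _ fun s _ => continuous_const.mul (hgc i s))
  have hq_le : ∀ i ν, ∀ z ∈ X i, q i ν ≤ f i z + ∑ s, ν s * g i z s := fun i ν z hz =>
    csInf_le ((hXcp i).image (hLc i ν)).bddBelow ⟨z, hz, rfl⟩
  have hq_att : ∀ i ν, ∃ z ∈ X i, q i ν = f i z + ∑ s, ν s * g i z s := fun i ν =>
    (hXcp i).exists_sInf_image_eq (hXne i) (hLc i ν).continuousOn
  have hq_ge : ∀ i ν c, (∀ z ∈ X i, c ≤ f i z + ∑ s, ν s * g i z s) → c ≤ q i ν := by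
    intro i ν c hc
    obtain ⟨z, hz, e⟩ := hq_att i ν
    rw [e]; exact hc z hz
  -- Lagrangian lower bound
  have hLag : ∀ z : ∀ i, Fin (n i) → ℝ, (∀ i, z i ∈ X i) →
      fstar ≤ ∑ i, (f i (z i) + ∑ s, μstar s * g i (z i) s) := by
    intro z hz
    rw [← hμopt]
    refine csInf_le ⟨∑ i, q i μstar, ?_⟩ ⟨z, hz, rfl⟩
    rintro y ⟨w, hw, rfl⟩
    exact Finset.sum_le_sum fun i _ => hq_le i _ _ (hw i)
  have hqstar : fstar ≤ ∑ i, q i μstar := by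
    choose z hz e using fun i => hq_att i μstar
    simp only [e]
    exact hLag z hz
  -- existence of an optimal solution
  have hxs : ∃ xs : ∀ i, Fin (n i) → ℝ, (∀ i, xs i ∈ X i) ∧ (∀ s, ∑ i, g i (xs i) s ≤ 0) ∧
      ∑ i, f i (xs i) = fstar := by
    let K : Set (∀ i, Fin (n i) → ℝ) := {z | ∀ i, z i ∈ X i}
    have hK : IsCompact K := isCompact_pi_infinite hXcp
    have hC : IsClosed {z : ∀ i, Fin (n i) → ℝ | ∀ s, ∑ i, g i (z i) s ≤ 0} := by
      rw [Set.setOf_forall]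
      refine isClosed_iInter fun s => isClosed_le ?_ continuous_const
      exact continuous_finsetSum _ fun i _ => (hgc i s).comp (continuous_apply i)
    obtain ⟨xb, hxb, hxb'⟩ := hSlater
    obtain ⟨xs, hxs, e⟩ := (hK.inter_right hC).exists_sInf_image_eq ⟨xb, hxb, fun s => (hxb' s).le⟩
      (f := fun z => ∑ i, f i (z i))
      (continuous_finsetSum _ fun i _ => (hfc i).comp (continuous_apply i)).continuousOn
    refine ⟨xs, hxs.1, hxs.2, ?_⟩
    rw [hfstar, ← e]
    congr 1
    ext y
    simp [K, and_assoc]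
  obtain ⟨xs, hxsX, hxsg, hxsf⟩ := hxs
  have hNpos : (0:ℝ) < N := by exact_mod_cast hN
  -- optimal allocation
  have hflow : ∀ s, ∃ l : Fin N → Fin N → ℝ, ∀ i,
      ∑ j ∈ G.neighborFinset i, (l i j - l j i)
        = (∑ k, g k (xs k) s) / N - g i (xs i) s := by
    intro s
    apply flow_exists G hG
    rw [Finset.sum_sub_distrib]
    simp
    field_simp
    simp
  choose l hl using hflow
  have hδsum : ∀ t s, ∑ i, δ t i s = 0 := by
    intro t s
    have := sum_adj G (fun i j => lam t i j s) (fun _ => 1)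
    simp at this
    simpa [hδ] using this.symm
  -- dual values
  set D : ℕ → ℝ := fun t => ∑ i, (q i (μ (t+1) i) + ∑ s, μ (t+1) i s * δ t i s) with hD
  have hDge : ∀ t, fstar ≤ D t := by
    intro t
    have h1 : ∑ i, (q i μstar + ∑ s, μstar s * δ t i s) ≤ D t :=
      Finset.sum_le_sum fun i _ => (hdual t i).2 μstar hμpos hM.le
    have h2 : ∑ i, ∑ s, μstar s * δ t i s = 0 := by
      rw [Finset.sum_comm]
      simp [← Finset.mul_sum, hδsum]
    rw [Finset.sum_add_distrib, h2] at h1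
    linarith
  have hμ0 : ∀ t i s, 0 ≤ μ (t+1) i s := fun t i => (hdual t i).1.1
  have hμM : ∀ t i s, μ (t+1) i s ≤ M := fun t i s =>
    (Finset.single_le_sum (fun s _ => hμ0 t i s) (Finset.mem_univ s)).trans (hdual t i).1.2
  have hμd : ∀ t i j s, |μ (t+1) i s - μ (t+1) j s| ≤ M := by
    intro t i j s
    rw [abs_le]
    constructor <;> linarith [hμ0 t i s, hμ0 t j s, hμM t i s, hμM t j s]
  have hlam' : ∀ t i j s, G.Adj i j →
      lam (t+1) i j s = lam t i j s - γ t * (μ (t+1) i s - μ (t+1) j s) := by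
    intro t i j s h
    rw [(hlam t i j).1 h]; simp
  -- subgradient inequality
  have hsub : ∀ t, D t - fstar ≤
      ∑ s, ∑ i, μ (t+1) i s * ∑ j ∈ G.neighborFinset i,
        ((lam t i j s - l s i j) - (lam t j i s - l s j i)) := by
    intro t
    have h1 : ∀ i s, ∑ j ∈ G.neighborFinset i,
        ((lam t i j s - l s i j) - (lam t j i s - l s j i))
        = δ t i s - ((∑ k, g k (xs k) s) / N - g i (xs i) s) := by
      intro i s
      rw [← hl s i, ← Finset.sum_sub_distrib]
      exact Finset.sum_congr rfl fun j _ => by ring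
    simp only [h1]
    rw [Finset.sum_comm, ← hxsf, ← Finset.sum_sub_distrib]
    refine Finset.sum_le_sum fun i _ => ?_
    have h2 := hq_le i (μ (t+1) i) (xs i) (hxsX i)
    have h3 : ∑ s, μ (t+1) i s * ((∑ k, g k (xs k) s) / N) ≤ 0 :=
      Finset.sum_nonpos fun s _ => mul_nonpos_of_nonneg_of_nonpos (hμ0 t i s)
        (div_nonpos_of_nonpos_of_nonneg (hxsg s) hNpos.le)
    simp only [mul_sub, Finset.sum_sub_distrib]
    linarith
  set W : ℕ → ℝ := fun t =>
    ∑ s, ∑ i, ∑ j ∈ G.neighborFinset i, (lam t i j s - l s i j) ^ 2 with hW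
  set C : ℝ := ∑ s : S, ∑ i, ∑ j ∈ G.neighborFinset i, M ^ 2 with hC
  have hC0 : 0 ≤ C := by positivity
  have hWstep : ∀ t, W (t+1) ≤ W t - 2 * (γ t * (D t - fstar)) + C * γ t ^ 2 := by
    intro t
    have h1 : W (t+1) ≤ W t - 2 * γ t * (∑ s, ∑ i, ∑ j ∈ G.neighborFinset i,
        (lam t i j s - l s i j) * (μ (t+1) i s - μ (t+1) j s)) + C * γ t ^ 2 := by
      simp only [hW, hC, Finset.mul_sum, Finset.sum_mul, ← Finset.sum_sub_distrib,
        ← Finset.sum_add_distrib]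
      refine Finset.sum_le_sum fun s _ => Finset.sum_le_sum fun i _ => Finset.sum_le_sum
        fun j hj => ?_
      rw [hlam' t i j s (by simpa using hj)]
      have h2 : (μ (t+1) i s - μ (t+1) j s) ^ 2 ≤ M ^ 2 := sq_le_sq' (abs_le.1 (hμd t i j s)).1
        (abs_le.1 (hμd t i j s)).2
      nlinarith [mul_le_mul_of_nonneg_right h2 (sq_nonneg (γ t))]
    have h2 : ∀ s, _ := fun s =>
      sum_adj G (fun i j => lam t i j s - l s i j) (fun i => μ (t+1) i s)
    simp only [h2] at h1
    have := mul_le_mul_of_nonneg_left (hsub t) (hγpos t)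
    linarith
  have hsummable := summable_of_descent γ (fun t => D t - fstar) W C hγpos
    (fun t => sub_nonneg.2 (hDge t)) hC0 (fun t => by positivity) hγsq hWstep
  set C' : ℝ := ∑ i, ∑ s : S, M * ∑ j ∈ G.neighborFinset i, 2 * M with hC'
  have hDstep : ∀ t, D (t+1) - fstar ≤ D t - fstar + C' * γ t := by
    intro t
    have h1 : ∀ i s, δ (t+1) i s - δ t i s ≤ ∑ j ∈ G.neighborFinset i, 2 * M * γ t := by
      intro i s
      simp only [hδ, ← Finset.sum_sub_distrib]
      refine Finset.sum_le_sum fun j hj => ?_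
      have hadj : G.Adj i j := by simpa using hj
      rw [hlam' t i j s hadj, hlam' t j i s hadj.symm]
      have := mul_le_mul_of_nonneg_left (abs_le.1 (hμd t i j s)).1 (hγpos t)
      linarith
    have h2 : D (t+1) ≤ D t + C' * γ t := by
      simp only [hD, hC', Finset.sum_mul, ← Finset.sum_add_distrib]
      refine Finset.sum_le_sum fun i _ => ?_
      have h3 := (hdual t i).2 (μ (t+1+1) i) (hμ0 (t+1) i) (hdual (t+1) i).1.2
      have h4 : ∑ s, μ (t+1+1) i s * δ (t+1) i s ≤ ∑ s, μ (t+1+1) i s * δ t i s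
          + ∑ s : S, M * (∑ j ∈ G.neighborFinset i, 2 * M) * γ t := by
        rw [← Finset.sum_add_distrib]
        refine Finset.sum_le_sum fun s _ => ?_
        have h5 := h1 i s
        rw [← Finset.sum_mul] at h5
        have h6 : 0 ≤ (∑ j ∈ G.neighborFinset i, 2 * M) * γ t :=
          mul_nonneg (Finset.sum_nonneg fun _ _ => by positivity) (hγpos t)
        have h7 := mul_le_mul_of_nonneg_left h5 (hμ0 (t+1) i s)
        have h8 := mul_le_mul_of_nonneg_right (hμM (t+1) i s) h6
        nlinarith
      change q i (μ (t+1+1) i) + ∑ s, μ (t+1+1) i s * δ t i s ≤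
        q i (μ (t+1) i) + ∑ s, μ (t+1) i s * δ t i s at h3
      linarith
    linarith
  have hDlim : Tendsto (fun t => D t - fstar) atTop (𝓝 0) :=
    real_conv γ _ C' (Finset.sum_nonneg fun _ _ => Finset.sum_nonneg fun _ _ =>
      mul_nonneg hM0 (Finset.sum_nonneg fun _ _ => by positivity)) hγpos
      (fun t => sub_nonneg.2 (hDge t)) hγdiv hγsq hsummable hDstep
  -- strong duality of the local problems
  have hPD : ∀ t, ∑ i, f i (x (t+1) i) + M * ∑ i, ρ (t+1) i ≤ D t := by
    intro t
    rw [Finset.mul_sum, ← Finset.sum_add_distrib]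
    refine Finset.sum_le_sum fun i _ => ?_
    obtain ⟨ν, hν0, hνM, hν⟩ := dual_exists (X i) (hXne i) (hXcv i) (f i) (hf i)
      (fun z s => g i z s + δ t i s) (fun s => (hg i s).add (convexOn_const _ convex_univ)) M
      (f i (x (t+1) i) + M * ρ (t+1) i) (fun z hz r hr h => (hprim t i).2 z r hz hr h)
    have h1 := hq_ge i ν (f i (x (t+1) i) + M * ρ (t+1) i - ∑ s, ν s * δ t i s) (by
      intro z hz
      have := hν z hz
      simp only [mul_add, Finset.sum_add_distrib] at this
      linarith)
    have h2 := (hdual t i).2 ν hν0 hνM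
    change q i ν + ∑ s, ν s * δ t i s ≤
        q i (μ (t+1) i) + ∑ s, μ (t+1) i s * δ t i s at h2
    linarith
  have hgr : ∀ t s, ∑ i, g i (x (t+1) i) s ≤ ∑ i, ρ (t+1) i := by
    intro t s
    have : ∑ i, (g i (x (t+1) i) s + δ t i s) ≤ ∑ i, ρ (t+1) i :=
      Finset.sum_le_sum fun i _ => (hprim t i).1.2.2 s
    rw [Finset.sum_add_distrib, hδsum] at this
    linarith
  have hR0 : ∀ t, 0 ≤ ∑ i, ρ (t+1) i := fun t => Finset.sum_nonneg fun i _ => (hprim t i).1.2.1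
  have hflow' : ∀ t, fstar - (∑ s, μstar s) * ∑ i, ρ (t+1) i ≤ ∑ i, f i (x (t+1) i) := by
    intro t
    have h1 := hLag (x (t+1)) (fun i => (hprim t i).1.1)
    rw [Finset.sum_add_distrib, Finset.sum_comm] at h1
    have h2 : ∑ s, ∑ i, μstar s * g i (x (t+1) i) s ≤ (∑ s, μstar s) * ∑ i, ρ (t+1) i := by
      rw [Finset.sum_mul]
      refine Finset.sum_le_sum fun s _ => ?_
      rw [← Finset.mul_sum]
      exact mul_le_mul_of_nonneg_left (hgr t s) (hμpos s)
    linarith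
  have hκ : 0 < M - ∑ s, μstar s := by linarith
  have hRlim : Tendsto (fun t => ∑ i, ρ (t+1) i) atTop (𝓝 0) := by
    have h1 := hDlim.div_const (M - ∑ s, μstar s)
    rw [zero_div] at h1
    refine squeeze_zero hR0 (fun t => ?_) h1
    rw [le_div_iff₀ hκ]
    linarith [hPD t, hflow' t]
  have hFlim : Tendsto (fun t => ∑ i, f i (x (t+1) i)) atTop (𝓝 fstar) := by
    have hlo : Tendsto (fun t => fstar - (∑ s, μstar s) * ∑ i, ρ (t+1) i) atTop (𝓝 fstar) := by
      simpa using (hRlim.const_mul (∑ s, μstar s)).const_sub fstar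
    have hhi : Tendsto D atTop (𝓝 fstar) := by
      simpa using hDlim.add_const fstar
    refine tendsto_of_tendsto_of_tendsto_of_le_of_le hlo hhi hflow' (fun t => ?_)
    have := mul_nonneg hM0 (hR0 t)
    linarith [hPD t]
  -- conclusion along a convergent subsequence
  intro xbar hxbar
  obtain ⟨ψ, hψ, hψx⟩ := TopologicalSpace.FirstCountableTopology.tendsto_subseq hxbar
  have hψ1 : Tendsto (fun k => ψ (k+1) - 1) atTop atTop :=
    (tendsto_sub_atTop_nat 1).comp (hψ.tendsto_atTop.comp (tendsto_add_atTop_nat 1))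
  have hψe : ∀ k, ψ (k+1) - 1 + 1 = ψ (k+1) := fun k => by
    have := hψ.le_apply (x := k+1)
    omega
  have hy : Tendsto (fun k => x (ψ (k+1) - 1 + 1)) atTop (𝓝 xbar) := by
    simp only [hψe]
    exact hψx.comp (tendsto_add_atTop_nat 1)
  have hyi : ∀ i, Tendsto (fun k => x (ψ (k+1) - 1 + 1) i) atTop (𝓝 (xbar i)) :=
    fun i => tendsto_pi_nhds.1 hy i
  refine ⟨fun i => ?_, fun s => ?_, ?_⟩
  · exact (hXcp i).isClosed.mem_of_tendsto (hyi i)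
      (Eventually.of_forall fun k => (hprim _ i).1.1)
  · have h1 : Tendsto (fun k => ∑ i, g i (x (ψ (k+1) - 1 + 1) i) s) atTop
        (𝓝 (∑ i, g i (xbar i) s)) :=
      tendsto_finsetSum _ fun i _ => ((hgc i s).tendsto (xbar i)).comp (hyi i)
    exact le_of_tendsto_of_tendsto' h1 (hRlim.comp hψ1) (fun k => hgr _ s)
  · have h1 : Tendsto (fun k => ∑ i, f i (x (ψ (k+1) - 1 + 1) i)) atTop
        (𝓝 (∑ i, f i (xbar i))) :=
      tendsto_finsetSum _ fun i _ => ((hfc i).tendsto (xbar i)).comp (hyi i)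
    exact tendsto_nhds_unique h1 (hFlim.comp hψ1)
end
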